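/- arXiv:1403.2264 — 2 statements merged into one kernel-verified Lean document; each statement's English description precedes it below -/
import Mathlib

section
/- Let N be a positive integer with odd prime divisors p₁, …, p_r and with 2-adic valuation k, and let ζ ∈ ℂ be a primitive N-th root of unity. Let E ⊆ ℂ be the field generated over ℚ by the square roots √(p₁*), …, √(p_r*) (where p* = (−1)^{(p−1)/2}·p for an odd prime p), together with √(−1) if k ≥ 2, and additionally √2 if k ≥ 3. Then E is contained in ℚ(ζ), and E equals the fixed field ℚ(ζ)^{G²}, where G = Gal(ℚ(ζ)/ℚ) and G² is the subgroup generated by squares of elements of G. -/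
open IntermediateField

/-! Over a base field of characteristic other than two in which the `N`-th cyclotomic polynomial is
irreducible, the Galois group is `(ℤ/N)ˣ`, an automorphism `σ` being recorded by the `a` with
`σ ζ = ζ ^ a`. Any square `g ^ 2` fixes a square root of an element of the base field, as `g` can
only change its sign. By the Galois correspondence the equality therefore amounts to this: if `σ`
fixes all the listed square roots, then `a` is a square modulo `N`. Now `√p*` is a Gauss sum, which
`σ` multiplies by the Legendre symbol `(a/p)`; `√-1` is a primitive fourth root of unity, fixed
only if `a ≡ 1 mod 4`; and `√2` is `ξ - ξ ^ 3` for a primitive eighth root of unity `ξ`, fixed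
together with `√-1` only if `a ≡ 1 mod 8`. By lifting to prime powers and the Chinese remainder
theorem, these local conditions make `a` a square modulo `N`.
-/

section SquaresModN

theorem isSquare_of_isSquare_val {M : Type*} [CommMonoid M] {u : Mˣ} (h : IsSquare (u : M)) :
    IsSquare u := by
  obtain ⟨r, hr⟩ := h
  obtain ⟨v, rfl⟩ : IsUnit r := isUnit_of_mul_isUnit_left (hr ▸ u.isUnit)
  exact ⟨v, Units.ext hr⟩

theorem isSquare_of_isSquare_pow_of_odd {G : Type*} [CommGroup G] {x : G} {n : ℕ} (hn : Odd n)
    (h : IsSquare (x ^ n)) : IsSquare x := by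
  obtain ⟨k, rfl⟩ := hn
  have hx : x = x ^ (2 * k + 1) / (x ^ k) ^ 2 := by
    rw [pow_succ, pow_mul', mul_div_cancel_left]
  exact hx ▸ h.div (IsSquare.sq _)

variable {a : ℕ}

-- Raising `a ≡ b ^ 2` modulo `m` to the power `m ^ k` improves it to a congruence modulo
-- `m ^ (k + 1)`, and the odd exponent `m ^ k` does not affect being a square.
theorem isSquare_natCast_zmod_odd_pow {m : ℕ} (hm : Odd m) (hcop : a.Coprime m)
    (h : IsSquare (a : ZMod m)) (k : ℕ) : IsSquare (a : ZMod (m ^ (k + 1))) := by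
  obtain ⟨c, hc⟩ := h
  obtain ⟨b, rfl⟩ := ZMod.intCast_surjective c
  have hmod : (m : ℤ) ∣ a - b ^ 2 := by
    rw [← ZMod.intCast_eq_intCast_iff_dvd_sub]
    push_cast
    rw [hc, sq]
  have hlift : (b ^ 2 : ZMod (m ^ (k + 1))) ^ m ^ k = a ^ m ^ k := by
    have := dvd_sub_pow_of_dvd_sub hmod k
    rw [← Nat.cast_pow, ← ZMod.intCast_eq_intCast_iff_dvd_sub] at this
    exact_mod_cast this
  let u := ZMod.unitOfCoprime a (hcop.pow_right (k + 1))
  have hu : IsSquare (u ^ m ^ k) := isSquare_of_isSquare_val <| by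
    rw [Units.val_pow_eq_pow_val, ZMod.coe_unitOfCoprime, ← hlift]
    exact (IsSquare.sq _).pow _
  exact (isSquare_of_isSquare_pow_of_odd hm.pow hu).map (Units.coeHom _)

theorem exists_two_pow_dvd_sq_sub {a : ℤ} (ha : 8 ∣ a - 1) (k : ℕ) :
    ∃ b : ℤ, 2 ^ (k + 3) ∣ b ^ 2 - a := by
  induction k with
  | zero => exact ⟨1, by simpa using dvd_sub_comm.mp ha⟩
  | succ k ih =>
    obtain ⟨b, c, hc⟩ := ih
    have hb : Odd b := by
      obtain ⟨d, hd⟩ := ha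
      have : Odd (b ^ 2) := ⟨2 ^ (k + 2) * c + 4 * d, by linear_combination hc + hd⟩
      exact (Int.odd_pow' two_ne_zero).mp this
    obtain ⟨d, hd⟩ := hb
    refine ⟨b + c * 2 ^ (k + 2), c * (d + 1) + c ^ 2 * 2 ^ k, ?_⟩
    linear_combination hc + c * 2 ^ (k + 3) * hd

theorem isSquare_natCast_zmod_two_pow {k : ℕ} (ha : a ≡ 1 [MOD (2 ^ k).gcd 8]) :
    IsSquare (a : ZMod (2 ^ k)) := by
  obtain hk | hk := le_total k 3
  · rw [Nat.gcd_eq_left (show 2 ^ k ∣ 8 from pow_dvd_pow 2 hk)] at ha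
    rw [(ZMod.natCast_eq_natCast_iff a 1 _).mpr ha, Nat.cast_one]
    exact IsSquare.one
  · rw [Nat.gcd_eq_right (show 8 ∣ 2 ^ k from pow_dvd_pow 2 hk)] at ha
    obtain ⟨m, rfl⟩ := Nat.exists_eq_add_of_le' hk
    obtain ⟨b, hb⟩ := exists_two_pow_dvd_sq_sub (Nat.modEq_iff_dvd.mp ha.symm) m
    rw [← Nat.cast_ofNat, ← Nat.cast_pow, ← ZMod.intCast_eq_intCast_iff_dvd_sub] at hb
    push_cast at hb
    exact hb ▸ IsSquare.sq _

theorem isSquare_natCast_zmod_mul {m n : ℕ} (hmn : m.Coprime n) (hm : IsSquare (a : ZMod m))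
    (hn : IsSquare (a : ZMod n)) : IsSquare (a : ZMod (m * n)) := by
  obtain ⟨r, hr⟩ := hm
  obtain ⟨s, hs⟩ := hn
  have h : IsSquare (a : ZMod m × ZMod n) := ⟨(r, s), Prod.ext hr hs⟩
  simpa only [map_natCast] using h.map (ZMod.chineseRemainder hmn).symm

theorem isSquare_natCast_zmod {N : ℕ} (hcop : a.Coprime N) (h8 : a ≡ 1 [MOD N.gcd 8])
    (hodd : ∀ p : ℕ, p.Prime → p ∣ N → Odd p → IsSquare (a : ZMod p)) :
    IsSquare (a : ZMod N) := by
  induction N using Nat.recOnPosPrimePosCoprime with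
  | zero => simp [(Nat.coprime_zero_right a).mp hcop]
  | one => exact ⟨0, Subsingleton.elim _ _⟩
  | prime_pow p n hp hn =>
    obtain rfl | hp2 := hp.eq_two_or_odd'
    · exact isSquare_natCast_zmod_two_pow h8
    · obtain ⟨k, rfl⟩ := Nat.exists_eq_add_of_lt hn
      have hpn : p ∣ p ^ (0 + k + 1) := dvd_pow_self p (by omega)
      rw [zero_add] at *
      exact isSquare_natCast_zmod_odd_pow hp2 (hcop.coprime_dvd_right hpn)
        (hodd p hp hpn hp2) k
  | coprime m n _ _ hmn ihm ihn =>
    exact isSquare_natCast_zmod_mul hmn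
      (ihm hcop.coprime_mul_right_right
        (h8.of_dvd (Nat.gcd_dvd_gcd_of_dvd_left 8 (Nat.dvd_mul_right m n)))
        fun p hp h => hodd p hp (h.mul_right n))
      (ihn hcop.coprime_mul_left_right
        (h8.of_dvd (Nat.gcd_dvd_gcd_of_dvd_left 8 (Nat.dvd_mul_left n m)))
        fun p hp h => hodd p hp (h.mul_left m))

theorem modEq_one_gcd_eight {N : ℕ} (hcop : a.Coprime N) (h4 : 4 ∣ N → a ≡ 1 [MOD 4])
    (h8 : 8 ∣ N → a ≡ 1 [MOD 8]) : a ≡ 1 [MOD N.gcd 8] := by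
  have hgcd := Nat.gcd_dvd_left N 8
  obtain ⟨i, hi, hpow⟩ := (Nat.dvd_prime_pow Nat.prime_two (m := 3)).mp (Nat.gcd_dvd_right N 8)
  rw [hpow] at hgcd ⊢
  interval_cases i
  · exact Nat.modEq_one
  · exact Nat.odd_iff.mp (Nat.coprime_two_right.mp (hcop.coprime_dvd_right hgcd))
  · exact h4 hgcd
  · exact h8 hgcd

end SquaresModN

section QuadraticGaussSum

variable {R : Type*} [CommRing R] (p : ℕ) [Fact p.Prime]

/-- The quadratic Gauss sum `∑ (x/p) ξ ^ x` over the residues `x` modulo `p`, where `(x/p)` is the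
Legendre symbol. It is meant for `ξ` with `ξ ^ p = 1`, for which it does not depend on the choice
of representatives. -/
noncomputable def quadraticGaussSum (ξ : R) : R :=
  ∑ x : ZMod p, (quadraticChar (ZMod p) x : R) * ξ ^ x.val

variable {p}

theorem map_quadraticGaussSum {S : Type*} [CommRing S] (σ : R →+* S) (ξ : R) :
    σ (quadraticGaussSum p ξ) = quadraticGaussSum p (σ ξ) := by
  simp [quadraticGaussSum]

theorem quadraticGaussSum_eq_gaussSum {ξ : R} (hξ : ξ ^ p = 1) :
    quadraticGaussSum p ξ =
      gaussSum ((quadraticChar (ZMod p)).ringHomComp (Int.castRingHom R))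
        (AddChar.zmodChar p hξ) :=
  rfl

theorem quadraticGaussSum_pow {ξ : R} (hξ : ξ ^ p = 1) {a : ℕ} (ha : (a : ZMod p) ≠ 0) :
    quadraticGaussSum p (ξ ^ a) = quadraticChar (ZMod p) a * quadraticGaussSum p ξ := by
  have hshift : gaussSum ((quadraticChar (ZMod p)).ringHomComp (Int.castRingHom R))
      ((AddChar.zmodChar p hξ).mulShift a) = quadraticGaussSum p (ξ ^ a) := by
    refine Finset.sum_congr rfl fun x _ => ?_
    rw [AddChar.mulShift_apply, ← ZMod.natCast_zmod_val x, ← Nat.cast_mul,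
      AddChar.zmodChar_apply', pow_mul, ZMod.natCast_zmod_val]
    rfl
  rw [← hshift, ← Units.val_mk0 ha, gaussSum_mulShift_eq, quadraticGaussSum_eq_gaussSum hξ,
    ((quadraticChar_isQuadratic (ZMod p)).comp _).inv]
  rfl

variable [IsDomain R] [NeZero (2 : R)]

theorem quadraticGaussSum_sq (hp : Odd p) {ξ : R} (hξ : IsPrimitiveRoot ξ p) :
    quadraticGaussSum p ξ ^ 2 = (-1) ^ ((p - 1) / 2) * p := by
  have hchar : ringChar (ZMod p) ≠ 2 := by
    rw [ZMod.ringChar_zmod_n]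
    exact hp.ne_two_of_dvd_nat dvd_rfl
  have hnontriv : (quadraticChar (ZMod p)).ringHomComp (Int.castRingHom R) ≠ 1 := by
    obtain ⟨x, hx⟩ := quadraticChar_exists_neg_one' hchar
    intro h
    have : (-1 : R) = 1 := by
      simpa [hx] using DFunLike.congr_fun h (x : ZMod p)
    exact two_ne_zero (α := R) (by linear_combination -this)
  have hneg : quadraticChar (ZMod p) (-1) = (-1) ^ ((p - 1) / 2) := by
    rw [quadraticChar_neg_one hchar, ZMod.card, ZMod.χ₄_eq_neg_one_pow (Nat.odd_iff.mp hp)]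
    obtain ⟨m, rfl⟩ := hp
    congr 1
    omega
  rw [quadraticGaussSum_eq_gaussSum hξ.pow_eq_one,
    gaussSum_sq hnontriv ((quadraticChar_isQuadratic (ZMod p)).comp _)
      (AddChar.zmodChar_primitive_of_primitive_root p hξ), MulChar.ringHomComp_apply, hneg,
    ZMod.card]
  simp

theorem isSquare_of_quadraticGaussSum_pow_eq (hp : Odd p) {ξ : R} (hξ : IsPrimitiveRoot ξ p)
    {a : ℕ} (h : quadraticGaussSum p (ξ ^ a) = quadraticGaussSum p ξ) :
    IsSquare (a : ZMod p) := by
  by_cases ha : (a : ZMod p) = 0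
  · exact ha ▸ IsSquare.zero
  have hne : quadraticGaussSum p ξ ≠ 0 := by
    have := hξ.neZero'
    rw [← pow_ne_zero_iff two_ne_zero, quadraticGaussSum_sq hp hξ]
    exact mul_ne_zero (pow_ne_zero _ (neg_ne_zero.mpr one_ne_zero)) (NeZero.ne _)
  rw [quadraticGaussSum_pow hξ.pow_eq_one ha] at h
  have hone : (quadraticChar (ZMod p) a : R) = 1 := (mul_eq_right₀ hne).mp h
  rw [← quadraticChar_one_iff_isSquare ha]
  refine (quadraticChar_dichotomy ha).resolve_right fun hneg => two_ne_zero (α := R) ?_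
  rw [hneg] at hone
  push_cast at hone
  linear_combination -hone

end QuadraticGaussSum

section RootsOfUnity

theorem isPrimitiveRoot_pow_div {M : Type*} [CommMonoid M] {z : M} {N d : ℕ} [NeZero N]
    (hz : IsPrimitiveRoot z N) (hd : d ∣ N) : IsPrimitiveRoot (z ^ (N / d)) d :=
  hz.pow (NeZero.pos N) (Nat.div_mul_cancel hd).symm

theorem modEq_one_of_pow_eq_self {M : Type*} [CommMonoid M] {ξ : M} {n a : ℕ} [NeZero n]
    (hξ : IsPrimitiveRoot ξ n) (h : ξ ^ a = ξ) : a ≡ 1 [MOD n] := by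
  rw [hξ.eq_orderOf, ← (hξ.isOfFinOrder (NeZero.ne n)).pow_eq_pow_iff_modEq, pow_one, h]

variable {R : Type*} [CommRing R] [IsDomain R] {ξ : R} {a : ℕ}

theorem sq_eq_neg_one_of_isPrimitiveRoot_four (hξ : IsPrimitiveRoot ξ 4) : ξ ^ 2 = -1 :=
  (hξ.pow (by norm_num) (by norm_num)).eq_neg_one_of_two_right

theorem pow_four_eq_neg_one_of_isPrimitiveRoot_eight (hξ : IsPrimitiveRoot ξ 8) : ξ ^ 4 = -1 :=
  (hξ.pow (by norm_num) (by norm_num)).eq_neg_one_of_two_right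

theorem sub_pow_three_sq_of_isPrimitiveRoot_eight (hξ : IsPrimitiveRoot ξ 8) :
    (ξ - ξ ^ 3) ^ 2 = 2 := by
  linear_combination (ξ ^ 2 - 2) * pow_four_eq_neg_one_of_isPrimitiveRoot_eight hξ

theorem modEq_one_eight_of_pow_sub_pow_three_eq [NeZero (2 : R)] (hξ : IsPrimitiveRoot ξ 8)
    (ha : a ≡ 1 [MOD 4]) (h : ξ ^ a - (ξ ^ a) ^ 3 = ξ - ξ ^ 3) : a ≡ 1 [MOD 8] := by
  by_contra hcon
  have h4 := pow_four_eq_neg_one_of_isPrimitiveRoot_eight hξ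
  have hneg : ξ ^ a = -ξ := by
    obtain ⟨m, rfl⟩ : ∃ m, a = 8 * m + 5 := ⟨a / 8, by unfold Nat.ModEq at *; omega⟩
    rw [pow_add, pow_mul, hξ.pow_eq_one, one_pow]
    linear_combination ξ * h4
  have hdouble : 2 * (ξ - ξ ^ 3) = 0 := by
    rw [hneg] at h
    linear_combination -h
  refine two_ne_zero (α := R) ?_
  rw [← sub_pow_three_sq_of_isPrimitiveRoot_eight hξ,
    (mul_eq_zero.mp hdouble).resolve_left two_ne_zero, zero_pow two_ne_zero]

end RootsOfUnity

/-- The integers whose square roots generate the field `E` of the theorem: the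
`p* = (-1) ^ ((p - 1) / 2) * p` for the odd primes `p ∣ N`, together with `-1` if `4 ∣ N` and
`2` if `8 ∣ N`. -/
def sqrtRadicands (N : ℕ) : Set ℤ :=
  {d | ∃ p : ℕ, p.Prime ∧ p ∣ N ∧ Odd p ∧ d = (-1) ^ ((p - 1) / 2) * p} ∪
    {d | 4 ∣ N ∧ d = -1} ∪ {d | 8 ∣ N ∧ d = 2}

/-- The field `E` of the theorem, generated over `K` by the square roots in `L` of the integers in
`sqrtRadicands N`. Elements of `sqrtRadicands N` without a square root in `L` contribute nothing. -/
def adjoinSqrtRadicands (K L : Type*) [Field K] [Field L] [Algebra K L] (N : ℕ) :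
    IntermediateField K L :=
  adjoin K {x : L | ∃ d ∈ sqrtRadicands N, x ^ 2 = d}

theorem setOf_sq_mem_sqrtRadicands {N : ℕ} (hN : N ≠ 0) (R : Type*) [CommRing R] :
    {x : R | ∃ d ∈ sqrtRadicands N, x ^ 2 = d} =
      {x : R | ∃ p : ℕ, p.Prime ∧ p ∣ N ∧ Odd p ∧ x ^ 2 = (-1) ^ ((p - 1) / 2) * (p : R)} ∪
        (if 2 ≤ N.factorization 2 then {x : R | x ^ 2 = -1} else ∅) ∪
        (if 3 ≤ N.factorization 2 then {x : R | x ^ 2 = 2} else ∅) := by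
  simp only [← Nat.prime_two.pow_dvd_iff_le_factorization hN]
  ext x
  constructor
  · rintro ⟨_, (⟨p, hp, hpN, hodd, rfl⟩ | ⟨h4, rfl⟩) | ⟨h8, rfl⟩, hx⟩
    · exact .inl (.inl ⟨p, hp, hpN, hodd, by simpa using hx⟩)
    · exact .inl (.inr (by simpa [h4] using hx))
    · exact .inr (by simpa [h8] using hx)
  · rintro ((⟨p, hp, hpN, hodd, hx⟩ | hx) | hx)
    · exact ⟨_, .inl (.inl ⟨p, hp, hpN, hodd, rfl⟩), by simpa using hx⟩
    · rw [Set.mem_ite_empty_right] at hx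
      exact ⟨_, .inl (.inr ⟨hx.1, rfl⟩), by simpa using hx.2⟩
    · rw [Set.mem_ite_empty_right] at hx
      exact ⟨_, .inr ⟨hx.1, rfl⟩, by simpa using hx.2⟩

section SqrtRadicands

variable {R : Type*} [CommRing R] [IsDomain R] [NeZero (2 : R)] {N : ℕ} [NeZero N] {z : R}

theorem exists_sq_eq_of_mem_sqrtRadicands (hz : IsPrimitiveRoot z N) {d : ℤ}
    (hd : d ∈ sqrtRadicands N) : ∃ y : R, y ^ 2 = d := by
  obtain (⟨p, hp, hpN, hodd, rfl⟩ | ⟨h4, rfl⟩) | ⟨h8, rfl⟩ := hd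
  · have : Fact p.Prime := ⟨hp⟩
    exact ⟨_, by simpa using quadraticGaussSum_sq hodd (isPrimitiveRoot_pow_div hz hpN)⟩
  · exact ⟨_, by simpa using
      sq_eq_neg_one_of_isPrimitiveRoot_four (isPrimitiveRoot_pow_div hz h4)⟩
  · exact ⟨_, by simpa using
      sub_pow_three_sq_of_isPrimitiveRoot_eight (isPrimitiveRoot_pow_div hz h8)⟩

theorem isSquare_natCast_zmod_of_fixes_sqrtRadicands (hz : IsPrimitiveRoot z N) {a : ℕ}
    (hcop : a.Coprime N) {σ : R →+* R} (hσ : σ z = z ^ a)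
    (hfix : ∀ d ∈ sqrtRadicands N, ∀ y : R, y ^ 2 = d → σ y = y) : IsSquare (a : ZMod N) := by
  have hpow (d : ℕ) : σ (z ^ (N / d)) = (z ^ (N / d)) ^ a := by
    rw [map_pow, hσ, pow_right_comm]
  have h4 (hN : 4 ∣ N) : a ≡ 1 [MOD 4] := by
    have hξ := isPrimitiveRoot_pow_div hz hN
    refine modEq_one_of_pow_eq_self hξ ?_
    rw [← hpow, hfix (-1) (.inl (.inr ⟨hN, rfl⟩))]
    simpa using sq_eq_neg_one_of_isPrimitiveRoot_four hξ
  have h8 (hN : 8 ∣ N) : a ≡ 1 [MOD 8] := by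
    have hξ := isPrimitiveRoot_pow_div hz hN
    refine modEq_one_eight_of_pow_sub_pow_three_eq hξ (h4 (dvd_trans (by norm_num) hN)) ?_
    rw [← hpow, ← map_pow, ← map_sub, hfix 2 (.inr ⟨hN, rfl⟩)]
    simpa using sub_pow_three_sq_of_isPrimitiveRoot_eight hξ
  refine isSquare_natCast_zmod hcop (modEq_one_gcd_eight hcop h4 h8) fun p hp hpN hodd => ?_
  have : Fact p.Prime := ⟨hp⟩
  have hξ := isPrimitiveRoot_pow_div hz hpN
  refine isSquare_of_quadraticGaussSum_pow_eq hodd hξ ?_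
  rw [← hpow, ← map_quadraticGaussSum, hfix _ (.inl (.inl ⟨p, hp, hpN, hodd, rfl⟩))]
  simpa using quadraticGaussSum_sq hodd hξ

end SqrtRadicands

/-- The subgroup `G²` generated by the squares of elements of `G`. -/
def squaresSubgroup (G : Type*) [Group G] : Subgroup G :=
  Subgroup.closure (Set.range fun g : G => g ^ 2)

section GaloisDescent

variable {K M : Type*} [Field K] [Field M] [Algebra K M]

theorem mem_fixedField_squaresSubgroup {y : M} {d : K} (hy : y ^ 2 = algebraMap K M d) :
    y ∈ fixedField (squaresSubgroup Gal(M/K)) := by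
  have hle : squaresSubgroup Gal(M/K) ≤ MulAction.stabilizer Gal(M/K) y := by
    rw [squaresSubgroup, Subgroup.closure_le]
    rintro _ ⟨g, rfl⟩
    have hg : g y ^ 2 = y ^ 2 := by rw [← map_pow, hy, g.commutes]
    change (g ^ 2) y = y
    rw [pow_two, AlgEquiv.mul_apply]
    obtain h | h := sq_eq_sq_iff_eq_or_eq_neg.mp hg <;> simp [h]
  exact (mem_fixedField_iff _ _).mpr fun σ hσ => hle hσ

theorem fixedField_squaresSubgroup_le [FiniteDimensional K M] [IsGalois K M]
    {F : IntermediateField K M} (hF : ∀ σ ∈ F.fixingSubgroup, IsSquare σ) :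
    fixedField (squaresSubgroup Gal(M/K)) ≤ F := by
  rw [← IsGalois.fixedField_fixingSubgroup F]
  refine fixedField_antitone fun σ hσ => ?_
  obtain ⟨τ, rfl⟩ := hF σ hσ
  exact Subgroup.subset_closure ⟨τ, sq τ⟩

end GaloisDescent

section CyclotomicExtension

open Polynomial

variable {K M : Type*} [Field K] [NeZero (2 : K)] [Field M] [Algebra K M] {N : ℕ} [NeZero N]
  [IsCyclotomicExtension {N} K M]

theorem adjoinSqrtRadicands_eq_fixedField (hirr : Irreducible (cyclotomic N K)) :
    adjoinSqrtRadicands K M N = fixedField (squaresSubgroup Gal(M/K)) := by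
  have := IsCyclotomicExtension.finiteDimensional {N} K M
  have := IsCyclotomicExtension.isGalois {N} K M
  have : NeZero (2 : M) := map_ofNat (algebraMap K M) 2 ▸ .of_injective (algebraMap K M).injective
  refine le_antisymm (adjoin_le_iff.mpr ?_) (fixedField_squaresSubgroup_le fun σ hσ => ?_)
  · rintro x ⟨d, -, hx⟩
    exact mem_fixedField_squaresSubgroup (d := (d : K)) (by simpa using hx)
  · let e := IsCyclotomicExtension.autEquivPow M hirr
    have hz := IsCyclotomicExtension.zeta_spec N K M
    have hσz : (σ : M →+* M) _ = _ ^ (e σ : ZMod N).val := (hz.autToPow_spec K σ).symm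
    have hsq : IsSquare (((e σ : ZMod N).val : ℕ) : ZMod N) :=
      isSquare_natCast_zmod_of_fixes_sqrtRadicands hz (ZMod.val_coe_unit_coprime _) hσz
        fun d hd y hy => hσ ⟨y, subset_adjoin _ _ ⟨d, hd, hy⟩⟩
    rw [ZMod.natCast_zmod_val] at hsq
    simpa using (isSquare_of_isSquare_val hsq).map e.symm

end CyclotomicExtension

section Ambient

open Polynomial

variable {K L : Type*} [Field K] [Field L] [Algebra K L] {N : ℕ} {ζ : L}

theorem image_val_setOf_sq_mem_sqrtRadicands [NeZero (2 : K)] [NeZero N] {F : IntermediateField K L}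
    (hζ : IsPrimitiveRoot ζ N) (hζF : ζ ∈ F) :
    F.val '' {x : F | ∃ d ∈ sqrtRadicands N, x ^ 2 = d} =
      {x : L | ∃ d ∈ sqrtRadicands N, x ^ 2 = d} := by
  have : NeZero (2 : F) := map_ofNat (algebraMap K F) 2 ▸ .of_injective (algebraMap K F).injective
  ext x
  constructor
  · rintro ⟨x, ⟨d, hd, hx⟩, rfl⟩
    exact ⟨d, hd, by rw [← map_pow, hx, map_intCast]⟩
  · rintro ⟨d, hd, hx⟩
    have hz : IsPrimitiveRoot (⟨ζ, hζF⟩ : F) N := hζ.of_map_of_injective F.val.injective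
    obtain ⟨y, hy⟩ := exists_sq_eq_of_mem_sqrtRadicands hz hd
    have hxy : x ^ 2 = (y : L) ^ 2 := by
      simpa [hx] using congrArg F.val hy.symm
    obtain rfl | rfl := sq_eq_sq_iff_eq_or_eq_neg.mp hxy
    · exact ⟨y, ⟨d, hd, hy⟩, rfl⟩
    · exact ⟨-y, ⟨d, hd, by rw [neg_sq, hy]⟩, rfl⟩

theorem isCyclotomicExtension_adjoin_simple [NeZero N] (hζ : IsPrimitiveRoot ζ N) :
    IsCyclotomicExtension {N} K K⟮ζ⟯ := by
  change IsCyclotomicExtension {N} K K⟮ζ⟯.toSubalgebra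
  rw [adjoin_simple_toSubalgebra_of_isAlgebraic
    (hζ.isIntegral (NeZero.pos N)).tower_top.isAlgebraic]
  exact hζ.adjoin_isCyclotomicExtension K

theorem map_val_adjoinSqrtRadicands [NeZero (2 : K)] [NeZero N] {F : IntermediateField K L}
    (hζ : IsPrimitiveRoot ζ N) (hζF : ζ ∈ F) :
    (adjoinSqrtRadicands K F N).map F.val = adjoinSqrtRadicands K L N := by
  rw [adjoinSqrtRadicands, adjoin_map, image_val_setOf_sq_mem_sqrtRadicands hζ hζF,
    adjoinSqrtRadicands]

theorem field_E_eq_fixedField_squares_of_cyclotomic_general [NeZero (2 : K)]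
    (hirr : Irreducible (cyclotomic N K)) (hζ : IsPrimitiveRoot ζ N) :
    adjoinSqrtRadicands K L N ≤ K⟮ζ⟯ ∧
      adjoinSqrtRadicands K L N = (fixedField (squaresSubgroup Gal(K⟮ζ⟯/K))).map K⟮ζ⟯.val := by
  have : NeZero N := ⟨by rintro rfl; simp at hirr⟩
  have := isCyclotomicExtension_adjoin_simple (K := K) hζ
  rw [← adjoinSqrtRadicands_eq_fixedField hirr,
    map_val_adjoinSqrtRadicands hζ (mem_adjoin_simple_self K ζ)]
  refine ⟨?_, rfl⟩
  rw [← map_val_adjoinSqrtRadicands hζ (mem_adjoin_simple_self K ζ), map_le_iff_le_comap]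
  exact fun x _ => x.2

end Ambient

/-- Let `N` be a positive integer with `2`-adic valuation `k`, and let
`ζ ∈ ℂ` be a primitive `N`-th root of unity.  Let `E ⊆ ℂ` be the field
generated over `ℚ` by the square roots `√(p*)` for the odd primes `p`
dividing `N` (where `p* = (-1)^((p-1)/2) * p`), together with `√(-1)` if
`k ≥ 2` and additionally `√2` if `k ≥ 3`.  Then `E ⊆ ℚ(ζ)` and `E` equals the
fixed field of the subgroup `G²` generated by the squares of elements of
`G = Gal(ℚ(ζ)/ℚ)`. -/
theorem field_E_eq_fixedField_squares_of_cyclotomic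
    (N : ℕ) (hN : 0 < N) (ζ : ℂ) (hζ : IsPrimitiveRoot ζ N)
    (E : IntermediateField ℚ ℂ)
    (hE : E = IntermediateField.adjoin ℚ
      ({x : ℂ | ∃ p : ℕ, p.Prime ∧ p ∣ N ∧ Odd p ∧
          x ^ 2 = (-1 : ℂ) ^ ((p - 1) / 2) * (p : ℂ)}
        ∪ (if 2 ≤ N.factorization 2 then {x : ℂ | x ^ 2 = -1} else ∅)
        ∪ (if 3 ≤ N.factorization 2 then {x : ℂ | x ^ 2 = 2} else ∅))) :
    E ≤ ℚ⟮ζ⟯ ∧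
      E = (IntermediateField.fixedField
          (Subgroup.closure
            (Set.range fun g : ℚ⟮ζ⟯ ≃ₐ[ℚ] ℚ⟮ζ⟯ => g ^ 2))).map ℚ⟮ζ⟯.val := by
  rw [hE, ← setOf_sq_mem_sqrtRadicands hN.ne' ℂ]
  exact field_E_eq_fixedField_squares_of_cyclotomic_general
    (Polynomial.cyclotomic.irreducible_rat hN) hζ
end

section
/- Let M ⊆ ℂ be a finite Galois extension of ℚ whose Galois group Gal(M/ℚ) is a generalized dihedral group, and let F be a subfield of M with F ⊆ ℝ. Let N be a positive integer and λ ∈ ℂ a primitive N-th root of unity. Then [F ∩ ℚ(λ) : ℚ] ≤ 2^{ω(N) − c₁(N) − c₂(N)}. -/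
open IntermediateField Classical

/-- Writing `n = 2^k * (2m+1)`, `c₁(n) = 0` if `k = 0` or `k = 2`,
`c₁(n) = 1` if `k = 1`, and `c₁(n) = -1` if `k ≥ 3`. -/
def c1 (n : ℕ) : ℤ :=
  if n.factorization 2 = 0 ∨ n.factorization 2 = 2 then 0
  else if n.factorization 2 = 1 then 1
  else -1

/-- `c₂(n) = 1` if `4 ∣ n` or some prime `p ≡ -1 (mod 4)` divides `n`,
and `c₂(n) = 0` otherwise. -/
noncomputable def c2 (n : ℕ) : ℤ :=
  if 4 ∣ n ∨ ∃ p : ℕ, p.Prime ∧ p ∣ n ∧ p % 4 = 3 then 1 else 0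

/-!
Squares in a generalized dihedral group are commutators, so every abelian Galois extension `K/ℚ`
inside `M` has a Galois group of exponent at most `2`. For `K = F ∩ ℚ(λ)` this group is a quotient
of `(ℤ/N)ˣ` by a subgroup that contains all squares and also `-1`, since `-1` acts on `ℚ(λ)` as
complex conjugation and `K` is real. The index of the squares is the number of square roots of `1`
modulo `N`, which the Chinese remainder theorem bounds by `2 ^ (ω(N) - c₁(N))`; when `c₂(N) = 1`,
the class of `-1` is not a square and a further factor `2` is gained.
-/

section Group

open scoped commutatorElement

variable {G : Type*} [Group G]

theorem two_mul_index_le_index_of_lt {H K : Subgroup G} [H.FiniteIndex] (h : H < K) :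
    2 * K.index ≤ H.index := by
  have hne : H.relIndex K ≠ 1 := fun h1 => h.not_ge (Subgroup.relIndex_eq_one.mp h1)
  have hpos : 0 < H.relIndex K :=
    Nat.pos_of_dvd_of_pos (H.relIndex_dvd_index_of_le h.le) H.index_ne_zero_of_finite.bot_lt
  rw [← Subgroup.relIndex_mul_index h.le]
  exact Nat.mul_le_mul_right _ (by lia)

theorem map_mem_commutator {G' : Type*} [Group G'] (f : G →* G') {g : G}
    (hg : g ∈ commutator G) : f g ∈ commutator G' := by
  rw [← Abelianization.ker_of]
  exact Abelianization.commutator_subset_ker (Abelianization.of.comp f) hg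

theorem sq_mem_commutator_of_inversion (φ : Multiplicative (ZMod 2) →* MulAut G)
    (hφ : ∀ h : G, φ (Multiplicative.ofAdd 1) h = h⁻¹) (g : G ⋊[φ] Multiplicative (ZMod 2)) :
    g ^ 2 ∈ commutator (G ⋊[φ] Multiplicative (ZMod 2)) := by
  obtain ⟨h, c⟩ := g
  obtain rfl | rfl : c = 1 ∨ c = Multiplicative.ofAdd 1 := by revert c; decide
  · have hsq : (⟨h, 1⟩ ^ 2 : G ⋊[φ] Multiplicative (ZMod 2)) =
        ⁅(SemidirectProduct.inl h : G ⋊[φ] Multiplicative (ZMod 2)),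
          SemidirectProduct.inr (Multiplicative.ofAdd 1)⁆ := by
      ext <;> simp [sq, commutatorElement_def, hφ]
    rw [hsq]
    exact Subgroup.commutator_mem_commutator (Subgroup.mem_top _) (Subgroup.mem_top _)
  · have hsq : (⟨h, Multiplicative.ofAdd 1⟩ ^ 2 : G ⋊[φ] Multiplicative (ZMod 2)) = 1 := by
      ext
      · simp [sq, hφ]
      · simp only [sq, SemidirectProduct.mul_right, SemidirectProduct.one_right]
        decide
    exact hsq ▸ one_mem _

theorem natCard_ker_powMonoidHom_le_mul_index {A : Type*} [CommGroup A] [Finite A]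
    (C : Subgroup A) [IsCyclic C] {d : ℕ} (hd : d ≠ 0) :
    Nat.card (powMonoidHom d : A →* A).ker ≤ d * C.index := by
  have hrange : (powMonoidHom d : C →* C).range.map C.subtype ≤
      (powMonoidHom d : A →* A).range := by
    rintro _ ⟨_, ⟨c, rfl⟩, rfl⟩
    exact ⟨c, rfl⟩
  calc
    Nat.card (powMonoidHom d : A →* A).ker = (powMonoidHom d : A →* A).range.index :=
      Subgroup.index_range.symm
    _ ≤ ((powMonoidHom d : C →* C).range.map C.subtype).index := Subgroup.index_antitone hrange
    _ = (Nat.card C).gcd d * C.index := by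
      rw [Subgroup.index_map_subtype, IsCyclic.index_powMonoidHom_range]
    _ ≤ d * C.index := Nat.mul_le_mul_right _ (Nat.gcd_le_right _ hd.bot_lt)

end Group

theorem natCard_rootsOfUnity_prod (k : ℕ) (R S : Type*) [CommMonoid R] [CommMonoid S] :
    Nat.card (rootsOfUnity k (R × S)) =
      Nat.card (rootsOfUnity k R) * Nat.card (rootsOfUnity k S) := by
  rw [← Nat.card_prod, ← Nat.card_congr (Subgroup.prodEquiv _ _).toEquiv]
  refine Nat.card_congr (MulEquiv.prodUnits.toEquiv.subtypeEquiv fun u => ?_)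
  rw [Subgroup.mem_prod, mem_rootsOfUnity, mem_rootsOfUnity, mem_rootsOfUnity,
    ← map_eq_one_iff MulEquiv.prodUnits MulEquiv.prodUnits.injective, map_pow, Prod.ext_iff]
  rfl

theorem natCard_rootsOfUnity_zmod_mul (k : ℕ) {m n : ℕ} (h : m.Coprime n) :
    Nat.card (rootsOfUnity k (ZMod (m * n))) =
      Nat.card (rootsOfUnity k (ZMod m)) * Nat.card (rootsOfUnity k (ZMod n)) := by
  rw [← natCard_rootsOfUnity_prod]
  exact Nat.card_congr ((ZMod.chineseRemainder h).toMulEquiv.restrictRootsOfUnity k).toEquiv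

theorem natCard_rootsOfUnity_le_of_isCyclic (M : Type*) [CommMonoid M] [Finite Mˣ] [IsCyclic Mˣ]
    {k : ℕ} (hk : k ≠ 0) : Nat.card (rootsOfUnity k M) ≤ k := by
  rw [rootsOfUnity_eq_ker, IsCyclic.card_powMonoidHom_ker]
  exact Nat.gcd_le_right _ hk.bot_lt

theorem natCard_rootsOfUnity_zmod_le_of_odd {k n : ℕ} (hk : k ≠ 0) (hn : Odd n) :
    Nat.card (rootsOfUnity k (ZMod n)) ≤ k ^ n.primeFactors.card := by
  induction n using Nat.recOnPosPrimePosCoprime with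
  | zero => simp at hn
  | one =>
    rw [Nat.primeFactors_one, Finset.card_empty, pow_zero]
    exact Finite.card_le_one_iff_subsingleton.mpr inferInstance
  | prime_pow p a hp ha =>
    have hp2 : p ≠ 2 := by
      rintro rfl
      exact Nat.not_even_iff_odd.mpr hn (even_two.pow_of_ne_zero ha.ne')
    have : NeZero (p ^ a) := ⟨pow_ne_zero _ hp.ne_zero⟩
    have := ZMod.isCyclic_units_of_prime_pow p hp hp2 a
    simpa [Nat.primeFactors_prime_pow ha.ne' hp] using
      natCard_rootsOfUnity_le_of_isCyclic (ZMod (p ^ a)) hk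
  | coprime a b _ _ hab iha ihb =>
    obtain ⟨ha, hb⟩ := Nat.odd_mul.mp hn
    rw [natCard_rootsOfUnity_zmod_mul k hab, hab.primeFactors_mul,
      Finset.card_union_of_disjoint hab.disjoint_primeFactors, pow_add]
    exact Nat.mul_le_mul (iha ha) (ihb hb)

theorem exists_units_zmod_two_pow_index_zpowers_eq_two (k : ℕ) :
    ∃ u : (ZMod (2 ^ (k + 2)))ˣ, (Subgroup.zpowers u).index = 2 := by
  let u : (ZMod (2 ^ (k + 2)))ˣ := ZMod.unitOfCoprime 5 (Nat.Coprime.pow_right _ (by norm_num))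
  have hu : orderOf u = 2 ^ k := by
    rw [← orderOf_units, ZMod.coe_unitOfCoprime]
    exact ZMod.orderOf_five k
  refine ⟨u, Nat.eq_of_mul_eq_mul_left (pow_pos two_pos k) ?_⟩
  rw [← hu, ← Nat.card_zpowers, Subgroup.card_mul_index, Nat.card_eq_fintype_card,
    ZMod.card_units_eq_totient, Nat.totient_prime_pow_succ Nat.prime_two, Nat.card_zpowers, hu]
  ring

theorem c1_mul_of_odd (n : ℕ) {m : ℕ} (hm : Odd m) : c1 (n * m) = c1 n := by
  have hfac : (n * m).factorization 2 = n.factorization 2 := by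
    obtain rfl | hn := eq_or_ne n 0
    · rw [zero_mul]
    · rw [Nat.factorization_mul hn hm.pos.ne', Finsupp.add_apply,
        Nat.factorization_eq_zero_of_not_dvd hm.not_two_dvd_nat, add_zero]
  rw [c1, hfac, c1]

theorem natCard_rootsOfUnity_two_zmod_two_pow_le (k : ℕ) :
    (Nat.card (rootsOfUnity 2 (ZMod (2 ^ k))) : ℝ) ≤
      2 ^ (((2 ^ k).primeFactors.card : ℤ) - c1 (2 ^ k)) := by
  have hω (j : ℕ) : (2 ^ (j + 1)).primeFactors.card = 1 := by
    simp [Nat.primeFactors_prime_pow j.succ_ne_zero Nat.prime_two]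
  have hc1 : c1 (2 ^ k) = if k = 0 ∨ k = 2 then 0 else if k = 1 then 1 else -1 := by
    simp [c1, Nat.prime_two.factorization_self]
  match k with
  | 0 => simp [c1]
  | 1 =>
    have hcard : Nat.card (rootsOfUnity 2 (ZMod (2 ^ 1))) ≤ 1 :=
      have : Subsingleton (ZMod (2 ^ 1))ˣ := inferInstanceAs (Subsingleton (ZMod 2)ˣ)
      Finite.card_le_one_iff_subsingleton.mpr inferInstance
    calc
      (Nat.card (rootsOfUnity 2 (ZMod (2 ^ 1))) : ℝ) ≤ 1 := mod_cast hcard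
      _ = _ := by rw [hω 0, hc1]; norm_num
  | 2 =>
    have : IsCyclic (ZMod (2 ^ 2))ˣ := ZMod.isCyclic_units_four
    calc
      (Nat.card (rootsOfUnity 2 (ZMod (2 ^ 2))) : ℝ) ≤ 2 :=
        mod_cast natCard_rootsOfUnity_le_of_isCyclic (ZMod (2 ^ 2)) two_ne_zero
      _ = _ := by rw [hω 1, hc1]; norm_num
  | k + 3 =>
    obtain ⟨u, hu⟩ := exists_units_zmod_two_pow_index_zpowers_eq_two (k + 1)
    have hcard := natCard_ker_powMonoidHom_le_mul_index (Subgroup.zpowers u) two_ne_zero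
    rw [← rootsOfUnity_eq_ker, hu] at hcard
    calc
      (Nat.card (rootsOfUnity 2 (ZMod (2 ^ (k + 3)))) : ℝ) ≤ 2 * 2 := mod_cast hcard
      _ = _ := by rw [hω (k + 2), hc1, if_neg (by lia), if_neg (by lia)]; norm_num

theorem natCard_rootsOfUnity_two_zmod_le {n : ℕ} (hn : n ≠ 0) :
    (Nat.card (rootsOfUnity 2 (ZMod n)) : ℝ) ≤ 2 ^ ((n.primeFactors.card : ℤ) - c1 n) := by
  obtain ⟨k, m, hm, rfl⟩ := Nat.exists_eq_two_pow_mul_odd hn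
  have hcop : (2 ^ k).Coprime m := (Nat.coprime_two_left.mpr hm).pow_left k
  rw [natCard_rootsOfUnity_zmod_mul 2 hcop, hcop.primeFactors_mul,
    Finset.card_union_of_disjoint hcop.disjoint_primeFactors, c1_mul_of_odd _ hm]
  push_cast
  calc
    (Nat.card (rootsOfUnity 2 (ZMod (2 ^ k))) * Nat.card (rootsOfUnity 2 (ZMod m)) : ℝ)
      ≤ 2 ^ (((2 ^ k).primeFactors.card : ℤ) - c1 (2 ^ k)) * 2 ^ (m.primeFactors.card : ℤ) := by
        gcongr
        · exact natCard_rootsOfUnity_two_zmod_two_pow_le k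
        · exact_mod_cast natCard_rootsOfUnity_zmod_le_of_odd two_ne_zero hm
    _ = _ := by
        rw [← zpow_add₀ two_ne_zero]
        congr 1
        ring

theorem not_isSquare_neg_one_zmod {n : ℕ}
    (h : 4 ∣ n ∨ ∃ p : ℕ, p.Prime ∧ p ∣ n ∧ p % 4 = 3) : ¬ IsSquare (-1 : ZMod n) := by
  intro hsq
  obtain h4 | ⟨p, hp, hpn, hp3⟩ := h
  · have h4sq : IsSquare (-1 : ZMod 4) := ZMod.isSquare_neg_one_of_dvd h4 hsq
    revert h4sq
    decide
  · have : Fact p.Prime := ⟨hp⟩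
    exact ZMod.exists_sq_eq_neg_one_iff.mp (ZMod.isSquare_neg_one_of_dvd hpn hsq) hp3

theorem natCard_le_of_surjective_units_zmod {A : Type*} [Group A] {n : ℕ} [NeZero n]
    {f : (ZMod n)ˣ →* A} (hf : Function.Surjective f) (hsq : ∀ a : A, a ^ 2 = 1)
    (hneg : f (-1) = 1) :
    (Nat.card A : ℝ) ≤ 2 ^ ((n.primeFactors.card : ℤ) - c1 n - c2 n) := by
  set R := (powMonoidHom 2 : (ZMod n)ˣ →* (ZMod n)ˣ).range
  have hRf : R ≤ f.ker := by
    rintro _ ⟨u, rfl⟩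
    simp [MonoidHom.mem_ker, hsq]
  have hA : Nat.card A = f.ker.index := by
    rw [Subgroup.index_ker, f.range_eq_top.mpr hf, Subgroup.card_top]
  have hR : (R.index : ℝ) ≤ 2 ^ ((n.primeFactors.card : ℤ) - c1 n) := by
    rw [Subgroup.index_range, ← rootsOfUnity_eq_ker]
    exact natCard_rootsOfUnity_two_zmod_le (NeZero.ne n)
  rw [hA, c2]
  split_ifs with hn
  · have hlt : R < f.ker := by
      refine lt_of_le_of_ne hRf fun h => ?_
      obtain ⟨u, hu⟩ : -1 ∈ R := h ▸ hneg
      exact not_isSquare_neg_one_zmod hn ⟨u, by simpa [sq] using (congrArg Units.val hu).symm⟩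
    have htwo : (2 * f.ker.index : ℝ) ≤ R.index := mod_cast two_mul_index_le_index_of_lt hlt
    rw [zpow_sub_one₀ two_ne_zero]
    linarith
  · rw [sub_zero]
    exact le_trans (mod_cast Subgroup.index_antitone hRf) hR

section Galois

open NumberField IsCyclotomicExtension.Rat

theorem pow_eq_one_of_pow_mem_commutator {k K M : Type*} [Field k] [Field K] [Field M] [Algebra k K]
    [Algebra k M] [IsAbelianGalois k K] [Normal k M] (i : K →ₐ[k] M) {n : ℕ}
    (hM : ∀ σ : Gal(M/k), σ ^ n ∈ commutator Gal(M/k)) (σ : Gal(K/k)) : σ ^ n = 1 := by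
  algebraize [i.toRingHom]
  have : IsScalarTower k K M := .of_algebraMap_eq' i.comp_algebraMap.symm
  obtain ⟨τ, rfl⟩ := AlgEquiv.restrictNormalHom_surjective (F := k) (K₁ := K) M σ
  rw [← map_pow]
  open scoped IsMulCommutative in
  exact Abelianization.commutator_subset_ker (AlgEquiv.restrictNormalHom K) (hM τ)

theorem isConj_galEquivZMod_symm_neg_one (n : ℕ) [NeZero n] (E : Type*) [Field E] [NumberField E]
    [IsCyclotomicExtension {n} ℚ E] (φ : E →+* ℂ) :
    ComplexEmbedding.IsConj φ ((galEquivZMod n E).symm (-1)) := by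
  have hζ := IsCyclotomicExtension.zeta_spec n ℚ E
  set ζ := IsCyclotomicExtension.zeta n ℚ E
  set σ := (galEquivZMod n E).symm (-1)
  have hσ : σ ζ * ζ = 1 := by
    rw [galEquivZMod_apply_of_pow_eq n E σ hζ.pow_eq_one, MulEquiv.apply_symm_apply, ← pow_succ,
      hζ.pow_eq_one_iff_dvd, ← ZMod.natCast_eq_zero_iff]
    simp
  have hconj : starRingEnd ℂ (φ ζ) = φ (σ ζ) := by
    rw [← Complex.inv_eq_conj ((hζ.map_of_injective φ.injective).norm'_eq_one (NeZero.ne n))]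
    exact inv_eq_of_mul_eq_one_left (by rw [← map_mul, hσ, map_one])
  have hext : (ComplexEmbedding.conjugate φ).toRatAlgHom =
      (φ.comp (σ : E →+* E)).toRatAlgHom :=
    (hζ.powerBasis ℚ).algHom_ext (by simpa using hconj)
  exact congrArg AlgHom.toRingHom hext

theorem finrank_le_of_isReal_of_sq_eq_one {n : ℕ} [NeZero n] {K E : Type*} [Field K] [Field E]
    [Algebra ℚ K] [FiniteDimensional ℚ K] [IsGalois ℚ K] [NumberField E]
    [IsCyclotomicExtension {n} ℚ E] (i : K →+* E) (φ : E →+* ℂ)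
    (hreal : ComplexEmbedding.IsReal (φ.comp i))
    (hsq : ∀ σ : Gal(K/ℚ), σ ^ 2 = 1) :
    (Module.finrank ℚ K : ℝ) ≤ 2 ^ ((n.primeFactors.card : ℤ) - c1 n - c2 n) := by
  algebraize [i]
  have : IsScalarTower ℚ K E := .of_algebraMap_eq' (Subsingleton.elim _ _)
  have : IsGalois ℚ E := IsCyclotomicExtension.isGalois {n} ℚ E
  let ρ : (ZMod n)ˣ →* Gal(K/ℚ) :=
    (AlgEquiv.restrictNormalHom K).comp (galEquivZMod n E).symm.toMonoidHom
  have hρ : Function.Surjective ρ :=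
    (AlgEquiv.restrictNormalHom_surjective E).comp (galEquivZMod n E).symm.surjective
  rw [← IsGalois.card_aut_eq_finrank]
  refine natCard_le_of_surjective_units_zmod hρ hsq (AlgEquiv.ext fun x => ?_)
  apply (φ.comp i).injective
  calc
    φ (algebraMap K E (ρ (-1) x)) = φ ((galEquivZMod n E).symm (-1) (algebraMap K E x)) :=
      congrArg φ (AlgEquiv.restrictNormal_commutes _ K x)
    _ = star (φ (i x)) := (isConj_galEquivZMod_symm_neg_one n E φ).eq _
    _ = φ (i x) := RingHom.congr_fun hreal x

end Galois

theorem degree_real_subfield_inf_cyclotomic_le_of_generalized_dihedral_general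
    (M : IntermediateField ℚ ℂ) [IsGalois ℚ M]
    (hM : ∀ σ : Gal(M/ℚ), σ ^ 2 ∈ commutator Gal(M/ℚ))
    (F : IntermediateField ℚ ℂ) (hFM : F ≤ M) (hFreal : ∀ x ∈ F, (x : ℂ).im = 0)
    (N : ℕ) (hN : 0 < N) (lam : ℂ) (hlam : IsPrimitiveRoot lam N) :
    (Module.finrank ℚ (F ⊓ ℚ⟮lam⟯ : IntermediateField ℚ ℂ) : ℝ)
      ≤ 2 ^ ((N.primeFactors.card : ℤ) - c1 N - c2 N) := by
  have : NeZero N := ⟨hN.ne'⟩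
  have : IsCyclotomicExtension {N} ℚ ℚ⟮lam⟯ :=
    (isCyclotomicExtension_singleton_iff_eq_adjoin N ℚ ℂ _ hlam).mpr rfl
  have : NumberField ℚ⟮lam⟯ := IsCyclotomicExtension.numberField {N} ℚ _
  have : IsAbelianGalois ℚ ℚ⟮lam⟯ := IsCyclotomicExtension.isAbelianGalois {N} ℚ _
  -- `toRatAlgHom` passes from the `ℚ`-algebra structure of an intermediate field to the canonical
  -- one of a field of characteristic zero, which is not definitionally the same.
  let i : ↥(F ⊓ ℚ⟮lam⟯) →ₐ[ℚ] ℚ⟮lam⟯ :=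
    (inclusion (inf_le_right : F ⊓ ℚ⟮lam⟯ ≤ _)).toRingHom.toRatAlgHom
  let j : ↥(F ⊓ ℚ⟮lam⟯) →ₐ[ℚ] M :=
    (inclusion (inf_le_left.trans hFM : F ⊓ ℚ⟮lam⟯ ≤ M)).toRingHom.toRatAlgHom
  have : FiniteDimensional ℚ ↥(F ⊓ ℚ⟮lam⟯) := .of_injective i.toLinearMap i.injective
  have : IsAbelianGalois ℚ ↥(F ⊓ ℚ⟮lam⟯) := .of_algHom i
  refine finrank_le_of_isReal_of_sq_eq_one i.toRingHom (algebraMap ℚ⟮lam⟯ ℂ) ?_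
    (pow_eq_one_of_pow_mem_commutator j hM)
  ext x
  exact Complex.conj_eq_iff_im.mpr (hFreal x x.2.1)

/-- Let `M ⊆ ℂ` be a finite Galois extension of `ℚ` whose Galois group is a
generalized dihedral group `H ⋊ (ℤ/2ℤ)` (with the nontrivial element of
`ℤ/2ℤ` acting on the abelian group `H` by inversion), and let `F ⊆ M` be a
subfield with `F ⊆ ℝ`.  If `λ ∈ ℂ` is a primitive `N`-th root of unity, then
`[F ∩ ℚ(λ) : ℚ] ≤ 2 ^ (ω(N) - c₁(N) - c₂(N))`. -/
theorem degree_real_subfield_inf_cyclotomic_le_of_generalized_dihedral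
    {H : Type*} [CommGroup H]
    (φ : Multiplicative (ZMod 2) →* MulAut H)
    (hφ : ∀ h : H, φ (Multiplicative.ofAdd (1 : ZMod 2)) h = h⁻¹)
    (M : IntermediateField ℚ ℂ) [FiniteDimensional ℚ M] [IsGalois ℚ M]
    (e : (M ≃ₐ[ℚ] M) ≃* (H ⋊[φ] Multiplicative (ZMod 2)))
    (F : IntermediateField ℚ ℂ) (hFM : F ≤ M)
    (hFreal : ∀ x ∈ F, (x : ℂ).im = 0)
    (N : ℕ) (hN : 0 < N) (lam : ℂ) (hlam : IsPrimitiveRoot lam N) :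
    (Module.finrank ℚ (F ⊓ ℚ⟮lam⟯ : IntermediateField ℚ ℂ) : ℝ)
      ≤ 2 ^ ((N.primeFactors.card : ℤ) - c1 N - c2 N) := by
  refine degree_real_subfield_inf_cyclotomic_le_of_generalized_dihedral_general M (fun σ => ?_)
    F hFM hFreal N hN lam hlam
  simpa using map_mem_commutator e.symm.toMonoidHom (sq_mem_commutator_of_inversion φ hφ (e σ))
end
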